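/- For every integer n ≥ 2 and every integer i ≥ 1, the topological n-th homotopy group π_n^top(Y_i^{(n)}, 0) of the union of the first i spheres of the n-dimensional Hawaiian earring carries the discrete topology. -/

import Mathlib

open scoped Topology Topology.Homotopy unitInterval

noncomputable section

/-- The quotient topology on the `N`-th homotopy group, induced from the compact-open
topology on the space of generalized loops. -/
instance homotopyGroupTopology (N X : Type*) [TopologicalSpace X] (x : X) :
    TopologicalSpace (HomotopyGroup N X x) :=
  inferInstanceAs (TopologicalSpace (Quotient (GenLoop.Homotopic.setoid N x)))

/-- The `n`-sphere of radius `1/j` centered at `(1/j, 0, …, 0)` in `ℝ^{n+1}`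
(it passes through the origin). -/
def hawSphere (n j : ℕ) : Set (EuclideanSpace ℝ (Fin (n+1))) :=
  Metric.sphere (EuclideanSpace.single (0 : Fin (n+1)) ((1 : ℝ)/j)) (1/j)

/-- The `n`-dimensional Hawaiian earring: the union of the spheres `hawSphere n j`, `j ≥ 1`. -/
def hawaiian (n : ℕ) : Set (EuclideanSpace ℝ (Fin (n+1))) :=
  ⋃ j ∈ {j : ℕ | 1 ≤ j}, hawSphere n j

/-- The union `Y_i^{(n)}` of the first `i` spheres of the `n`-dimensional Hawaiian earring. -/
def Ysub (n i : ℕ) : Set (EuclideanSpace ℝ (Fin (n+1))) :=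
  ⋃ j ∈ Finset.Icc 1 i, hawSphere n j

lemma zero_mem_hawSphere (n j : ℕ) : (0 : EuclideanSpace ℝ (Fin (n+1))) ∈ hawSphere n j := by
  have : dist (0 : EuclideanSpace ℝ (Fin (n+1)))
      (EuclideanSpace.single (0 : Fin (n+1)) ((1 : ℝ)/j)) = 1/j := by
    rw [dist_zero_left, EuclideanSpace.norm_single, Real.norm_eq_abs,
      abs_of_nonneg (one_div_nonneg.mpr (Nat.cast_nonneg j))]
  exact Metric.mem_sphere.mpr this

lemma zero_mem_hawaiian (n : ℕ) : (0 : EuclideanSpace ℝ (Fin (n+1))) ∈ hawaiian n :=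
  Set.mem_biUnion (by simp : (1 : ℕ) ∈ {j : ℕ | 1 ≤ j}) (zero_mem_hawSphere n 1)

lemma zero_mem_Ysub (n i : ℕ) : (0 : EuclideanSpace ℝ (Fin (n+1))) ∈ Ysub n (i+1) :=
  Set.mem_biUnion (by simp : (1 : ℕ) ∈ Finset.Icc 1 (i+1)) (zero_mem_hawSphere n 1)

/-- The basepoint (the origin) of the Hawaiian earring. -/
def hawaiianPt (n : ℕ) : ↥(hawaiian n) := ⟨0, zero_mem_hawaiian n⟩

/-- The basepoint (the origin) of `Y_{i+1}^{(n)}`. -/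
def YsubPt (n i : ℕ) : ↥(Ysub n (i+1)) := ⟨0, zero_mem_Ysub n i⟩

/-- Homotopy groups of a neighbourhood retract of a normed space are discrete. -/
theorem discrete_of_nhd_retract {N E : Type*} [NormedAddCommGroup E] [NormedSpace ℝ E]
    (S U : Set E) (hU : IsOpen U) (hSU : S ⊆ U) (r : E → E) (hr : ContinuousOn r U)
    (hrS : ∀ x ∈ U, r x ∈ S) (hid : ∀ x ∈ S, r x = x) (p : S) :
    DiscreteTopology (HomotopyGroup N S p) := by
  have key : ∀ g : GenLoop N S p, ∃ δ > 0, ∀ h : GenLoop N S p,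
      dist (g : C(N → I, S)) (h : C(N → I, S)) < δ → GenLoop.Homotopic g h := by
    intro g
    have hK : IsCompact (Set.range (fun t : N → I => ((g : C(N → I, S)) t : E))) :=
      isCompact_range (by fun_prop)
    obtain ⟨δ, hδ, hsub⟩ := hK.exists_thickening_subset_open hU (by
      rintro _ ⟨t, rfl⟩
      exact hSU (Subtype.coe_prop _))
    refine ⟨δ, hδ, fun h hgh => ?_⟩
    have hseg : ∀ q : I × (N → I),
        (1 - (q.1 : ℝ)) • ((g : C(N → I, S)) q.2 : E)
          + (q.1 : ℝ) • ((h : C(N → I, S)) q.2 : E) ∈ U := by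
      intro q
      apply hsub
      rw [Metric.mem_thickening_iff]
      refine ⟨_, ⟨q.2, rfl⟩, ?_⟩
      have h1 : dist ((g : C(N → I, S)) q.2) ((h : C(N → I, S)) q.2) < δ :=
        lt_of_le_of_lt (ContinuousMap.dist_apply_le_dist _) hgh
      rw [Subtype.dist_eq, dist_comm, dist_eq_norm] at h1
      rw [dist_eq_norm]
      have h2 : (1 - (q.1 : ℝ)) • ((g : C(N → I, S)) q.2 : E)
          + (q.1 : ℝ) • ((h : C(N → I, S)) q.2 : E) - ((g : C(N → I, S)) q.2 : E)
          = (q.1 : ℝ) • (((h : C(N → I, S)) q.2 : E) - ((g : C(N → I, S)) q.2 : E)) := by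
        module
      simp only [h2]
      rw [norm_smul, Real.norm_eq_abs, abs_of_nonneg q.1.2.1]
      exact lt_of_le_of_lt (mul_le_of_le_one_left (norm_nonneg _) q.1.2.2) h1
    have hc : Continuous (fun q : I × (N → I) =>
        (1 - (q.1 : ℝ)) • ((g : C(N → I, S)) q.2 : E)
          + (q.1 : ℝ) • ((h : C(N → I, S)) q.2 : E)) := by fun_prop
    refine ⟨⟨⟨⟨fun q => ⟨r _, hrS _ (hseg q)⟩, ?_⟩, ?_, ?_⟩, ?_⟩⟩
    · exact (hr.comp_continuous hc hseg).subtype_mk _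
    · intro t
      apply Subtype.ext
      simpa using hid _ (Subtype.coe_prop _)
    · intro t
      apply Subtype.ext
      simpa using hid _ (Subtype.coe_prop _)
    · intro s t ht
      apply Subtype.ext
      have e1 : (g : C(N → I, S)) t = p := g.2 t ht
      have e2 : (h : C(N → I, S)) t = p := h.2 t ht
      have e3 : (1 - (s : ℝ)) • (p : E) + (s : ℝ) • (p : E) = p := by module
      simp only [ContinuousMap.coe_mk, e1, e2, e3]
      exact hid _ p.2
  rw [discreteTopology_iff_isOpen_singleton]
  intro a
  induction a using Quotient.inductionOn with
  | h f =>
  have hq : Topology.IsQuotientMap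
      (fun g : GenLoop N S p => (Quotient.mk (GenLoop.Homotopic.setoid N p) g :
        HomotopyGroup N S p)) := isQuotientMap_quot_mk
  refine hq.isOpen_preimage.mp ?_
  rw [Metric.isOpen_iff]
  intro g hg
  obtain ⟨δ, hδ, H⟩ := key g
  refine ⟨δ, hδ, fun h hh => ?_⟩
  have hgh := H h (by rw [dist_comm]; exact hh)
  exact (Quotient.sound (s := GenLoop.Homotopic.setoid N p) hgh.symm).trans hg

section retraction

variable {d : ℕ}

/-- Auxiliary cut-off function. -/
def bfun (j : ℕ) (x : EuclideanSpace ℝ (Fin (d+1))) : ℝ :=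
  max 0 (‖x‖^2 - 2 * |2 * x 0 - j * ‖x‖^2|)

/-- Auxiliary denominator. -/
def dfun (j : ℕ) (x : EuclideanSpace ℝ (Fin (d+1))) : ℝ :=
  (bfun j x)^2 * j^2 / 4 + (‖x‖^2 - (x 0)^2)

/-- The part of the retraction landing in the `j`-th sphere. -/
def rfun (j : ℕ) (x : EuclideanSpace ℝ (Fin (d+1))) : EuclideanSpace ℝ (Fin (d+1)) :=
  (bfun j x / dfun j x) • ((bfun j x * j / 2 - x 0) • EuclideanSpace.single (0 : Fin (d+1)) (1:ℝ) + x)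

lemma sq_le_normsq (x : EuclideanSpace ℝ (Fin (d+1))) : (x 0)^2 ≤ ‖x‖^2 := by
  rw [EuclideanSpace.real_norm_sq_eq]
  exact Finset.single_le_sum (f := fun i => (x i)^2) (fun i _ => sq_nonneg _) (Finset.mem_univ 0)

lemma norm_aux (a : ℝ) (x : EuclideanSpace ℝ (Fin (d+1))) :
    ‖(a - x 0) • EuclideanSpace.single (0 : Fin (d+1)) (1:ℝ) + x‖^2 = a^2 + (‖x‖^2 - (x 0)^2) := by
  rw [norm_add_sq_real, norm_smul, real_inner_smul_left, EuclideanSpace.inner_single_left]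
  simp
  ring

lemma axis_aux (x : EuclideanSpace ℝ (Fin (d+1))) (h : ‖x‖^2 = (x 0)^2) :
    x = EuclideanSpace.single (0 : Fin (d+1)) (x 0) := by
  have := norm_aux 0 x
  have h2 : ‖(0 - x 0) • EuclideanSpace.single (0 : Fin (d+1)) (1:ℝ) + x‖^2 = 0 := by
    rw [this, h]; ring
  have h3 : (0 - x 0) • EuclideanSpace.single (0 : Fin (d+1)) (1:ℝ) + x = 0 := by
    simpa using h2
  have h4 : x = (x 0) • EuclideanSpace.single (0 : Fin (d+1)) (1:ℝ) := by
    have : x = ((0 - x 0) • EuclideanSpace.single (0 : Fin (d+1)) (1:ℝ) + x)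
      + (x 0) • EuclideanSpace.single (0 : Fin (d+1)) (1:ℝ) := by module
    rw [h3, zero_add] at this
    exact this
  conv_lhs => rw [h4]
  ext i
  by_cases hi : i = 0 <;> simp [hi]

lemma mem_hawSphere_iff (j : ℕ) (hj : 1 ≤ j) (x : EuclideanSpace ℝ (Fin (d+1))) :
    x ∈ hawSphere d j ↔ j * ‖x‖^2 = 2 * x 0 := by
  have hj' : (0:ℝ) < j := by exact_mod_cast hj
  unfold hawSphere
  rw [mem_sphere_iff_norm, ← sq_eq_sq₀ (norm_nonneg _) (by positivity), norm_sub_sq_real,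
    EuclideanSpace.inner_single_right]
  simp
  field_simp
  constructor <;> intro h <;> linarith

lemma rfun_mem (j : ℕ) (hj : 1 ≤ j) (x : EuclideanSpace ℝ (Fin (d+1))) :
    rfun j x ∈ hawSphere d j := by
  rw [mem_hawSphere_iff j hj]
  have h1 : ‖rfun j x‖^2 = (bfun j x / dfun j x)^2 * dfun j x := by
    unfold rfun
    rw [norm_smul, mul_pow, norm_aux, Real.norm_eq_abs, sq_abs]
    congr 1
    unfold dfun
    ring
  have h2 : (rfun j x) 0 = (bfun j x / dfun j x) * (bfun j x * j / 2) := by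
    simp [rfun]
    ring
  rw [h1, h2]
  by_cases hd : dfun j x = 0
  · simp [hd]
  · field_simp

lemma rfun_eq_zero (j : ℕ) (x : EuclideanSpace ℝ (Fin (d+1))) (h : bfun j x = 0) :
    rfun j x = 0 := by
  simp [rfun, h]

lemma bfun_disj (j k : ℕ) (hjk : j ≠ k) (x : EuclideanSpace ℝ (Fin (d+1)))
    (h : bfun j x ≠ 0) : bfun k x = 0 := by
  unfold bfun at *
  have h1 : 0 < ‖x‖^2 - 2 * |2 * x 0 - j * ‖x‖^2| := by
    by_contra hc
    exact h (max_eq_left (not_lt.mp hc))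
  apply max_eq_left
  have h3 : (1:ℝ) ≤ |(j:ℝ) - k| := by
    have : (1:ℤ) ≤ |(j:ℤ) - k| := Int.one_le_abs (by omega)
    exact_mod_cast this
  have h4 : |((j:ℝ) - k) * ‖x‖^2| ≤ |2 * x 0 - k * ‖x‖^2| + |2 * x 0 - j * ‖x‖^2| := by
    have : ((j:ℝ) - k) * ‖x‖^2 = (2 * x 0 - k * ‖x‖^2) - (2 * x 0 - j * ‖x‖^2) := by ring
    rw [this]
    exact abs_sub _ _
  rw [abs_mul, abs_of_nonneg (sq_nonneg ‖x‖)] at h4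
  nlinarith [sq_nonneg ‖x‖]

lemma rfun_id (j : ℕ) (hj : 1 ≤ j) (x : EuclideanSpace ℝ (Fin (d+1))) (hx : x ∈ hawSphere d j) :
    rfun j x = x := by
  rw [mem_hawSphere_iff j hj] at hx
  have hb : bfun j x = ‖x‖^2 := by
    simp [bfun, hx]
  by_cases h0 : x = 0
  · subst h0
    simp [rfun, bfun]
  have hn : ‖x‖^2 ≠ 0 := by simpa using h0
  have hd : dfun j x = ‖x‖^2 := by
    have : x 0 = j * ‖x‖^2 / 2 := by linarith
    unfold dfun
    rw [hb, this]
    ring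
  have h3 : ‖x‖^2 * (j:ℝ) / 2 - x 0 = 0 := by linarith
  unfold rfun
  rw [hb, hd, div_self hn, h3]
  simp

lemma continuous_bfun (j : ℕ) : Continuous (bfun (d := d) j) := by
  unfold bfun
  fun_prop

lemma continuous_dfun (j : ℕ) : Continuous (dfun (d := d) j) := by
  unfold dfun
  have := continuous_bfun (d := d) j
  fun_prop

lemma continuousAt_rfun_zero (j : ℕ) : ContinuousAt (rfun (d := d) j) 0 := by
  have h0 : rfun (d := d) j 0 = 0 := by simp [rfun, bfun]
  unfold ContinuousAt
  rw [h0]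
  have hlim : Filter.Tendsto (fun x : EuclideanSpace ℝ (Fin (d+1)) => 2 * ‖x‖) (𝓝 0) (𝓝 0) := by
    have : Continuous (fun x : EuclideanSpace ℝ (Fin (d+1)) => 2 * ‖x‖) := by fun_prop
    simpa using this.tendsto 0
  apply squeeze_zero_norm' _ hlim
  have hj1 : (0:ℝ) < 1 / (j + 1) := by positivity
  filter_upwards [Metric.ball_mem_nhds (0 : EuclideanSpace ℝ (Fin (d+1))) hj1] with x hx
  rw [mem_ball_zero_iff, lt_div_iff₀ (by positivity)] at hx
  by_cases hb : bfun j x = 0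
  · rw [rfun_eq_zero j x hb]; simp
  have hb0 : 0 < ‖x‖^2 - 2 * |2 * x 0 - j * ‖x‖^2| := by
    by_contra hc
    exact hb (max_eq_left (not_lt.mp hc))
  have hbe : bfun j x = ‖x‖^2 - 2 * |2 * x 0 - j * ‖x‖^2| := max_eq_right hb0.le
  have hble : bfun j x ≤ ‖x‖^2 := by rw [hbe]; linarith [abs_nonneg (2 * x 0 - j * ‖x‖^2)]
  have hbpos : 0 < bfun j x := by rw [hbe]; exact hb0
  have hxpos : 0 < ‖x‖ := by
    rcases (norm_nonneg x).eq_or_lt with h | h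
    · rw [← h] at hble; norm_num at hble; linarith
    · exact h
  have hx0 : |2 * x 0| ≤ (j + 1) * ‖x‖^2 := by
    have : |2 * x 0| ≤ |2 * x 0 - j * ‖x‖^2| + |j * ‖x‖^2| := by
      have e : 2 * x 0 = (2 * x 0 - j * ‖x‖^2) + j * ‖x‖^2 := by ring
      conv_lhs => rw [e]
      exact abs_add_le _ _
    rw [abs_of_nonneg (by positivity : (0:ℝ) ≤ j * ‖x‖^2)] at this
    nlinarith [sq_nonneg ‖x‖, abs_nonneg (2 * x 0 - j * ‖x‖^2)]
  have hx1 : |2 * x 0| ≤ ‖x‖ := by nlinarith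
  have hx2 : 4 * (x 0)^2 ≤ ‖x‖^2 := by
    have := pow_le_pow_left₀ (abs_nonneg _) hx1 2
    rw [sq_abs] at this
    nlinarith
  have hd : ‖x‖^2 / 4 ≤ dfun j x := by
    unfold dfun
    have : 0 ≤ (bfun j x)^2 * j^2 / 4 := by positivity
    nlinarith
  have hdpos : 0 < dfun j x := lt_of_lt_of_le (by positivity) hd
  have h1 : ‖rfun j x‖^2 = (bfun j x / dfun j x)^2 * dfun j x := by
    unfold rfun
    rw [norm_smul, mul_pow, norm_aux, Real.norm_eq_abs, sq_abs]
    congr 1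
    unfold dfun
    ring
  have h2 : (bfun j x / dfun j x)^2 * dfun j x = (bfun j x)^2 / dfun j x := by field_simp
  apply le_of_sq_le_sq _ (by positivity)
  rw [h1, h2, div_le_iff₀ hdpos]
  have : (bfun j x)^2 ≤ (‖x‖^2)^2 := pow_le_pow_left₀ hbpos.le hble 2
  nlinarith [sq_nonneg ‖x‖]

/-- The two excluded points for the index `j`. -/
def badSet (d j : ℕ) : Set (EuclideanSpace ℝ (Fin (d+1))) :=
  {EuclideanSpace.single (0 : Fin (d+1)) (2 / ((j:ℝ) + 1/2)),
    EuclideanSpace.single (0 : Fin (d+1)) (2 / ((j:ℝ) - 1/2))}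

lemma continuousAt_rfun (j : ℕ) (hj : 1 ≤ j) (x : EuclideanSpace ℝ (Fin (d+1)))
    (hx : x ∉ badSet d j) : ContinuousAt (rfun (d := d) j) x := by
  have hj' : (1:ℝ) ≤ j := by exact_mod_cast hj
  by_cases h0 : x = 0
  · subst h0; exact continuousAt_rfun_zero j
  by_cases hd : dfun j x = 0
  · have hb : bfun j x = 0 ∧ ‖x‖^2 = (x 0)^2 := by
      have h1 := sq_le_normsq x
      unfold dfun at hd
      have h2 : 0 ≤ (bfun j x)^2 * j^2 / 4 := by positivity
      refine ⟨?_, by linarith⟩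
      have h3 : (bfun j x)^2 * (j:ℝ)^2 = 0 := by linarith
      have h4 : (j:ℝ)^2 ≠ 0 := by positivity
      simpa [h4, show j ≠ 0 by omega] using h3
    obtain ⟨hb, hn⟩ := hb
    have hax := axis_aux x hn
    have hx0 : x 0 ≠ 0 := by
      intro h; rw [h] at hax; apply h0; rw [hax]; simp
    have hle : ‖x‖^2 - 2 * |2 * x 0 - j * ‖x‖^2| ≤ 0 := by
      rw [← hb]; exact le_max_right _ _
    have hlt : ‖x‖^2 - 2 * |2 * x 0 - j * ‖x‖^2| < 0 := by
      refine lt_of_le_of_ne hle fun heq => hx ?_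
      rw [hn] at heq
      have hp : (j:ℝ) + 1/2 ≠ 0 := by positivity
      have hm : (j:ℝ) - 1/2 ≠ 0 := by intro h; linarith
      rcases abs_choice (2 * x 0 - j * (x 0)^2) with h | h
      · rw [h] at heq
        left
        rw [hax]; congr 1
        rw [eq_div_iff hp]
        apply mul_left_cancel₀ hx0
        linarith
      · rw [h] at heq
        right
        rw [Set.mem_singleton_iff, hax]; congr 1
        rw [eq_div_iff hm]
        apply mul_left_cancel₀ hx0
        linarith
    have hev : rfun (d := d) j =ᶠ[𝓝 x] fun _ => 0 := by
      have hc : Continuous fun y : EuclideanSpace ℝ (Fin (d+1)) =>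
        ‖y‖^2 - 2 * |2 * y 0 - j * ‖y‖^2| := by fun_prop
      filter_upwards [hc.continuousAt.eventually_lt continuousAt_const hlt] with y hy
      exact rfun_eq_zero j y (max_eq_left hy.le)
    exact continuousAt_const.congr hev.symm
  · have h1 := (continuous_bfun (d := d) j).continuousAt (x := x)
    have h2 := (continuous_dfun (d := d) j).continuousAt (x := x)
    unfold rfun
    exact (h1.div h2 hd).smul (by fun_prop)

lemma Ysub_not_bad (j k : ℕ) (hj : 1 ≤ j) (hk : 1 ≤ k) (x : EuclideanSpace ℝ (Fin (d+1)))
    (hx : x ∈ hawSphere d k) : x ∉ badSet d j := by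
  have hj' : (1:ℝ) ≤ j := by exact_mod_cast hj
  rw [mem_hawSphere_iff k hk] at hx
  have key : ∀ c : ℝ, 0 < c → x = EuclideanSpace.single (0 : Fin (d+1)) (2 / c) → (k:ℝ) = c := by
    intro c hc h
    rw [h] at hx
    simp at hx
    field_simp at hx
    rw [sq_abs, sq] at hx
    exact mul_right_cancel₀ hc.ne' hx
  rintro (h | h)
  · have := key _ (by positivity) h
    have h2 : ((2 * k : ℕ) : ℝ) = ((2 * j + 1 : ℕ) : ℝ) := by push_cast; linarith
    have := Nat.cast_injective h2
    omega
  · have := key _ (by linarith) h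
    have h2 : ((2 * k + 1 : ℕ) : ℝ) = ((2 * j : ℕ) : ℝ) := by push_cast; linarith
    have := Nat.cast_injective h2
    omega

end retraction

/-- For `n = m+2 ≥ 2` and `i+1 ≥ 1`, the topological `n`-th homotopy group of the union of
the first `i+1` spheres of the `n`-dimensional Hawaiian earring is discrete. -/
theorem piTop_Ysub_discrete (m i : ℕ) :
    DiscreteTopology (HomotopyGroup (Fin (m+2)) (Ysub (m+2) (i+1)) (YsubPt (m+2) i)) := by
  refine discrete_of_nhd_retract (Ysub (m+2) (i+1))
    (⋂ j ∈ Finset.Icc 1 (i+1), (badSet (m+2) j)ᶜ) ?_ ?_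
    (fun x => ∑ j ∈ Finset.Icc 1 (i+1), rfun j x) ?_ ?_ ?_ _
  · refine isOpen_biInter_finset fun j _ => ?_
    exact (Set.Finite.isClosed (by unfold badSet; exact Set.toFinite _)).isOpen_compl
  · intro x hx
    obtain ⟨k, hk, hxk⟩ := Set.mem_iUnion₂.mp hx
    refine Set.mem_iInter₂.mpr fun j hj => ?_
    exact Ysub_not_bad j k (Finset.mem_Icc.mp hj).1 (Finset.mem_Icc.mp hk).1 x hxk
  · refine continuousOn_finsetSum _ fun j hj x hx => ?_
    exact (continuousAt_rfun j (Finset.mem_Icc.mp hj).1 x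
      (Set.mem_iInter₂.mp hx j hj)).continuousWithinAt
  · intro x _
    by_cases h : ∃ k ∈ Finset.Icc 1 (i+1), bfun k x ≠ 0
    · obtain ⟨k, hk, hb⟩ := h
      have : ∑ j ∈ Finset.Icc 1 (i+1), rfun j x = rfun k x :=
        Finset.sum_eq_single_of_mem k hk fun j _ hjk =>
          rfun_eq_zero j x (bfun_disj k j hjk.symm x hb)
      simp only [this]
      exact Set.mem_iUnion₂.mpr ⟨k, hk, rfun_mem k (Finset.mem_Icc.mp hk).1 x⟩
    · push Not at h
      have : ∑ j ∈ Finset.Icc 1 (i+1), rfun j x = 0 :=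
        Finset.sum_eq_zero fun j hj => rfun_eq_zero j x (h j hj)
      simp only [this]
      exact zero_mem_Ysub _ _
  · intro x hx
    obtain ⟨k, hk, hxk⟩ := Set.mem_iUnion₂.mp hx
    have hk1 := (Finset.mem_Icc.mp hk).1
    have hid := rfun_id k hk1 x hxk
    by_cases hb : bfun k x = 0
    · have h0 : x = 0 := by rw [← hid]; exact rfun_eq_zero k x hb
      subst h0
      exact Finset.sum_eq_zero fun j _ => rfun_eq_zero j 0 (by simp [bfun])
    · have : ∑ j ∈ Finset.Icc 1 (i+1), rfun j x = rfun k x :=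
        Finset.sum_eq_single_of_mem k hk fun j _ hjk =>
          rfun_eq_zero j x (bfun_disj k j hjk.symm x hb)
      simp only [this]
      exact hid
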